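/- Let γ > 0 and let u₀ : ℝ → ℝ be a twice continuously differentiable 1-periodic non-constant even function with ∫₀¹ u₀(x) dx = 0. Then for all sufficiently large positive integers n, the initial data x ↦ u₀(nx) leads to finite-time wave breaking: every periodic classical solution u of the Ostrovsky–Hunter equation on [0,T) with u(0,x) = u₀(nx) and with u_x bounded from below on [0,T) × ℝ has T < ∞. -/

import Mathlib

open MeasureTheory Filter Set intervalIntegral

/-- A periodic (period `1` in `x`) classical solution of the Ostrovsky–Hunter
equation `(u_t + u u_x)_x = γ u` on the set `S` of times (typically `[0,T)`):
`u` is `1`-periodic in `x`, continuously differentiable in `t`, twice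
continuously differentiable in `x`, with `u_tx` continuous, and the expanded
equation `u_tx + u_x² + u u_xx = γ u` holds pointwise at positive times of `S`. -/
structure IsPeriodicOHSolution (γ : ℝ) (S : Set ℝ) (u : ℝ → ℝ → ℝ) : Prop where
  periodic : ∀ t ∈ S, ∀ x : ℝ, u t (x + 1) = u t x
  diff_t : ∀ t ∈ S, ∀ x : ℝ, DifferentiableAt ℝ (fun s => u s x) t
  diff_x : ∀ t ∈ S, ∀ x : ℝ, DifferentiableAt ℝ (u t) x
  diff_xx : ∀ t ∈ S, ∀ x : ℝ, DifferentiableAt ℝ (deriv (u t)) x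
  diff_tx : ∀ t ∈ S, ∀ x : ℝ, DifferentiableAt ℝ (fun y => deriv (fun s => u s y) t) x
  cont_u : ContinuousOn (fun p : ℝ × ℝ => u p.1 p.2) (S ×ˢ (Set.univ : Set ℝ))
  cont_ut : ContinuousOn (fun p : ℝ × ℝ => deriv (fun s => u s p.2) p.1)
      (S ×ˢ (Set.univ : Set ℝ))
  cont_ux : ContinuousOn (fun p : ℝ × ℝ => deriv (u p.1) p.2) (S ×ˢ (Set.univ : Set ℝ))
  cont_uxx : ContinuousOn (fun p : ℝ × ℝ => deriv (deriv (u p.1)) p.2)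
      (S ×ˢ (Set.univ : Set ℝ))
  cont_utx : ContinuousOn (fun p : ℝ × ℝ => deriv (fun y => deriv (fun s => u s y) p.1) p.2)
      (S ×ˢ (Set.univ : Set ℝ))
  eqn : ∀ t ∈ S, 0 < t → ∀ x : ℝ,
    deriv (fun y => deriv (fun s => u s y) t) x
      + (deriv (u t) x) ^ 2 + u t x * deriv (deriv (u t)) x = γ * u t x

/-! Let `w = u_t + u u_x`, so that the equation reads `w_x = γ u`. For `γ ≠ 0` periodicity of `w`
forces `u`, and then `w` itself, to have mean zero; hence `w` vanishes somewhere in each period and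
`|w| ≤ |γ| sup |u|`. Since `w = u_t` wherever `u ≠ 0` and `u²` is maximal, `sup |u|` grows at most
exponentially, at a rate depending only on `γ`. On the other hand the minimum `m` of `u_x` over a
period satisfies the Riccati equation `m' = γ u - m²`. Replacing `u₀` by `x ↦ u₀ (n x)` leaves
`sup |u₀|` unchanged and multiplies the negative number `min u₀'` by `n`, so for large `n` the
quadratic term wins and `m` reaches `-∞` within any prescribed time. -/

open scoped Topology

lemma deriv_periodic {𝕜 E : Type*} [NontriviallyNormedField 𝕜] [NormedAddCommGroup E]
    [NormedSpace 𝕜 E] {f : 𝕜 → E} {c : 𝕜} (hf : Function.Periodic f c) :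
    Function.Periodic (deriv f) c := by
  intro x
  rw [← deriv_comp_add_const]
  exact congrArg (deriv · x) (funext hf)

lemma exists_deriv_neg_of_periodic {f : ℝ → ℝ} {c : ℝ} (hf : Function.Periodic f c)
    (hc : 0 < c) (hd : Differentiable ℝ f) (hne : ∃ x y, f x ≠ f y) : ∃ y, deriv f y < 0 := by
  by_contra! hnonneg
  have hmono : Monotone f := monotone_of_deriv_nonneg hd hnonneg
  have hle (x y : ℝ) : f x ≤ f y := by
    obtain ⟨k, hk⟩ := exists_nat_ge ((x - y) / c)
    calc f x ≤ f (y + k * c) := hmono (by linarith [(div_le_iff₀ hc).1 hk])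
      _ = f y := hf.nat_mul k y
  obtain ⟨x, y, hxy⟩ := hne
  exact hxy (le_antisymm (hle x y) (hle y x))

lemma isMinOn_univ_of_periodic {α β : Type*} [AddCommGroup α] [LinearOrder α]
    [IsOrderedAddMonoid α] [Archimedean α] [Preorder β] {f : α → β} {c x : α}
    (hf : Function.Periodic f c) (hc : 0 < c) (hx : IsMinOn f (Icc 0 c) x) :
    IsMinOn f univ x := by
  intro y _
  obtain ⟨z, hz, hyz⟩ := hf.exists_mem_Ico₀ hc y
  exact (hx (Ico_subset_Icc_self hz)).trans_eq hyz.symm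

section ParametricIntegral

variable {E : Type*} [NormedAddCommGroup E] [NormedSpace ℝ E]

lemma hasDerivAt_integral_of_continuousOn_deriv {F F' : ℝ → ℝ → E} {a b x₀ : ℝ} {U : Set ℝ}
    (hU : U ∈ 𝓝 x₀) (hF : ∀ x ∈ U, ContinuousOn (F x) (uIcc a b))
    (hF' : ContinuousOn F'.uncurry (U ×ˢ uIcc a b))
    (hderiv : ∀ x ∈ U, ∀ t ∈ uIcc a b, HasDerivAt (F · t) (F' x t) x) :
    HasDerivAt (fun x ↦ ∫ t in a..b, F x t) (∫ t in a..b, F' x₀ t) x₀ := by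
  obtain ⟨V, hV, hVU, hVc⟩ := local_compact_nhds hU
  obtain ⟨C, hC⟩ := (hVc.prod isCompact_uIcc).exists_bound_of_continuousOn
    (hF'.mono (prod_mono hVU subset_rfl))
  have hmeas {g : ℝ → E} (hg : ContinuousOn g (uIcc a b)) :
      AEStronglyMeasurable g (volume.restrict (uIoc a b)) :=
    (hg.mono uIoc_subset_uIcc).aestronglyMeasurable measurableSet_uIoc
  refine (intervalIntegral.hasDerivAt_integral_of_dominated_loc_of_deriv_le
    (bound := fun _ ↦ C) hV ?_ (hF x₀ (mem_of_mem_nhds hU)).intervalIntegrable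
    (hmeas (hF'.uncurry_left x₀ (mem_of_mem_nhds hU))) ?_ intervalIntegrable_const ?_).2
  · filter_upwards [hU] with x hx using hmeas (hF x hx)
  · exact .of_forall fun t ht x hx ↦ hC (x, t) ⟨hx, uIoc_subset_uIcc ht⟩
  · exact .of_forall fun t ht x hx ↦ hderiv x (hVU hx) t (uIoc_subset_uIcc ht)

/- With only `f₁₂` known to exist, `f₁₂` is recovered as the derivative of `f₂` by differentiating
`f s y = f a y + ∫ r in a..s, f₁ r y` under the integral sign. -/
lemma hasDerivWithinAt_Ici_of_continuousOn_mixed_deriv [CompleteSpace E]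
    {f f₁ f₁₂ : ℝ → ℝ → E} {f₂ : ℝ → E}
    {a b x : ℝ} {U : Set ℝ} (hab : a < b) (hU : U ∈ 𝓝 x)
    (h₁ : ∀ s ∈ Icc a b, ∀ y ∈ U, HasDerivAt (f · y) (f₁ s y) s)
    (h₂ : ∀ s ∈ Icc a b, HasDerivAt (f s) (f₂ s) x)
    (h₁₂ : ∀ s ∈ Icc a b, ∀ y ∈ U, HasDerivAt (f₁ s) (f₁₂ s y) y)
    (hf₁ : ∀ y ∈ U, ContinuousOn (f₁ · y) (Icc a b))
    (hf₁₂ : ContinuousOn f₁₂.uncurry (Icc a b ×ˢ U)) :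
    HasDerivWithinAt f₂ (f₁₂ a x) (Ici a) a := by
  have hx : x ∈ U := mem_of_mem_nhds hU
  have hint : ∀ s ∈ Icc a b, f₂ s = f₂ a + ∫ r in a..s, f₁₂ r x := by
    intro s hs
    have hsub : uIcc a s ⊆ Icc a b := by
      rw [uIcc_of_le hs.1]
      exact Icc_subset_Icc_right hs.2
    have hf : (fun y ↦ f a y + ∫ r in a..s, f₁ r y) =ᶠ[𝓝 x] f s := by
      filter_upwards [hU] with y hy
      rw [integral_eq_sub_of_hasDerivAt (fun r hr ↦ h₁ r (hsub hr) y hy)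
        ((hf₁ y hy).mono hsub).intervalIntegrable, add_sub_cancel]
    have hderiv := hasDerivAt_integral_of_continuousOn_deriv (F := fun y r ↦ f₁ r y)
      (F' := fun y r ↦ f₁₂ r y) hU (fun y hy ↦ (hf₁ y hy).mono hsub)
      (hf₁₂.comp continuous_swap.continuousOn fun p hp ↦ ⟨hsub hp.2, hp.1⟩)
      (fun y hy r hr ↦ h₁₂ r (hsub hr) y hy)
    exact ((h₂ s hs).congr_of_eventuallyEq hf).unique ((h₂ a (left_mem_Icc.2 hab.le)).add hderiv)
  have hcont : ContinuousOn (f₁₂ · x) (Icc a b) := hf₁₂.uncurry_right x hx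
  have hIoi : 𝓝[>] a ≤ 𝓝[Icc a b] a := nhdsWithin_le_of_mem (Icc_mem_nhdsGT hab)
  have hFTC : HasDerivWithinAt (fun s ↦ ∫ r in a..s, f₁₂ r x) (f₁₂ a x) (Ici a) a :=
    integral_hasDerivWithinAt_right .refl
      ((hcont.stronglyMeasurableAtFilter_nhdsWithin measurableSet_Icc a).filter_mono hIoi)
      ((hcont a (left_mem_Icc.2 hab.le)).mono_left hIoi)
  refine (hFTC.const_add (f₂ a)).congr_of_eventuallyEq ?_ (hint a (left_mem_Icc.2 hab.le))
  filter_upwards [Icc_mem_nhdsGE hab] with s hs using hint s hs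

end ParametricIntegral

lemma continuousOn_sInf_image {α X Y : Type*} [ConditionallyCompleteLinearOrder α]
    [TopologicalSpace α] [OrderTopology α] [TopologicalSpace X] [TopologicalSpace Y]
    {F : Y → X → α} {S : Set Y} {K : Set X} (hK : IsCompact K)
    (hF : ContinuousOn F.uncurry (S ×ˢ K)) : ContinuousOn (fun t ↦ sInf (F t '' K)) S := by
  rw [continuousOn_iff_continuous_domRestrict]
  have hcont : Continuous fun p : S × K ↦ F p.1 p.2 :=
    hF.comp_continuous (f := fun p : S × K ↦ ((p.1 : Y), (p.2 : X))) (by fun_prop)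
      fun p ↦ ⟨p.1.2, p.2.2⟩
  have := isCompact_iff_compactSpace.1 hK
  refine (isCompact_univ.continuous_sInf (f := fun (t : S) (x : K) ↦ F t x) hcont).congr fun t ↦ ?_
  rw [image_univ, domRestrict_apply, image_eq_range]

lemma frequently_slope_sInf_image_lt {X : Type*} {F : ℝ → X → ℝ} {K : Set X} {t d r : ℝ} {x : X}
    (hbdd : ∀ᶠ s in 𝓝[>] t, BddBelow (F s '' K)) (hxK : x ∈ K) (hmin : IsMinOn (F t) K x)
    (hd : HasDerivWithinAt (F · x) d (Ici t) t) (hr : d < r) :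
    ∃ᶠ s in 𝓝[>] t, slope (fun s ↦ sInf (F s '' K)) t s < r := by
  have hslope : ∃ᶠ s in 𝓝[>] t, slope (F · x) t s < r := hd.liminf_right_slope_le hr
  refine (hslope.and_eventually (hbdd.and self_mem_nhdsWithin)).mono ?_
  rintro s ⟨hs, hbs, hts⟩
  have hst : 0 < s - t := sub_pos.2 hts
  have hleast : sInf (F t '' K) = F t x :=
    IsLeast.csInf_eq ⟨mem_image_of_mem _ hxK, forall_mem_image.2 hmin⟩
  refine lt_of_le_of_lt ?_ hs
  rw [slope_def_field, slope_def_field, hleast]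
  exact div_le_div_of_nonneg_right
    (sub_le_sub_right (csInf_le hbs (mem_image_of_mem _ hxK)) _) hst.le

/- A minimizer at time `t` bounds the minimum from above at later times, so the minimum inherits the
right derivative bound and the one-dimensional fencing theorem applies to it. -/
lemma exists_le_of_isMinOn_deriv_lt {X : Type*} [TopologicalSpace X] {F : ℝ → X → ℝ} {K : Set X}
    (hK : IsCompact K) {a b : ℝ}
    (hF : ContinuousOn F.uncurry (Icc a b ×ˢ K)) {B B' : ℝ → ℝ}
    (hB : ∀ t, HasDerivAt B (B' t) t) (ha : ∃ x ∈ K, F a x ≤ B a)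
    (hderiv : ∀ t ∈ Ico a b, ∀ x ∈ K, IsMinOn (F t) K x →
      ∃ d, HasDerivWithinAt (F · x) d (Ici t) t ∧ (F t x = B t → d < B' t))
    {t : ℝ} (ht : t ∈ Icc a b) : ∃ x ∈ K, F t x ≤ B t := by
  have hcont : ∀ s ∈ Icc a b, ContinuousOn (F s) K := fun s hs ↦ hF.uncurry_left s hs
  have hbdd : ∀ s ∈ Icc a b, BddBelow (F s '' K) := fun s hs ↦ hK.bddBelow_image (hcont s hs)
  obtain ⟨x₀, hx₀, hx₀B⟩ := ha
  have hmin : ∀ s ∈ Icc a b, ∃ x ∈ K, sInf (F s '' K) = F s x ∧ IsMinOn (F s) K x :=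
    fun s hs ↦ hK.exists_sInf_image_eq_and_le ⟨x₀, hx₀⟩ (hcont s hs)
  have hright : ∀ s ∈ Ico a b, ∃ d, (∀ r, d < r →
      ∃ᶠ z in 𝓝[>] s, slope (fun s ↦ sInf (F s '' K)) s z < r) ∧
      (sInf (F s '' K) = B s → d < B' s) := by
    intro s hs
    obtain ⟨x, hx, hsx, hxmin⟩ := hmin s (Ico_subset_Icc_self hs)
    obtain ⟨d, hd, hdB⟩ := hderiv s hs x hx hxmin
    have hev : ∀ᶠ z in 𝓝[>] s, BddBelow (F z '' K) := by
      filter_upwards [Ioo_mem_nhdsGT hs.2] with z hz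
      exact hbdd z ⟨hs.1.trans hz.1.le, hz.2.le⟩
    exact ⟨d, fun r hr ↦ frequently_slope_sInf_image_lt hev hx hxmin hd hr, hsx ▸ hdB⟩
  choose! d hd hdB using hright
  obtain ⟨x, hx, htx, -⟩ := hmin t ht
  refine ⟨x, hx, htx ▸ image_le_of_liminf_slope_right_lt_deriv_boundary
    (continuousOn_sInf_image hK hF) hd ?_ hB hdB ht⟩
  exact (csInf_le (hbdd a (left_mem_Icc.2 (ht.1.trans ht.2))) (mem_image_of_mem _ hx₀)).trans hx₀B

/-- The material derivative `u_t + u u_x`, in terms of which the equation reads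
`(materialDeriv u t)_x = γ u`. -/
noncomputable def materialDeriv (u : ℝ → ℝ → ℝ) (t x : ℝ) : ℝ :=
  deriv (fun s ↦ u s x) t + u t x * deriv (u t) x

namespace IsPeriodicOHSolution

variable {γ T : ℝ} {u : ℝ → ℝ → ℝ}

lemma mono {S S' : Set ℝ} (h : IsPeriodicOHSolution γ S u) (hS : S' ⊆ S) :
    IsPeriodicOHSolution γ S' u where
  periodic t ht := h.periodic t (hS ht)
  diff_t t ht := h.diff_t t (hS ht)
  diff_x t ht := h.diff_x t (hS ht)
  diff_xx t ht := h.diff_xx t (hS ht)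
  diff_tx t ht := h.diff_tx t (hS ht)
  cont_u := h.cont_u.mono (prod_mono_left hS)
  cont_ut := h.cont_ut.mono (prod_mono_left hS)
  cont_ux := h.cont_ux.mono (prod_mono_left hS)
  cont_uxx := h.cont_uxx.mono (prod_mono_left hS)
  cont_utx := h.cont_utx.mono (prod_mono_left hS)
  eqn t ht := h.eqn t (hS ht)

lemma continuous_u {S : Set ℝ} {t : ℝ} (h : IsPeriodicOHSolution γ S u) (ht : t ∈ S) :
    Continuous (u t) :=
  continuousOn_univ.1 (h.cont_u.uncurry_left t ht)

lemma continuous_deriv_x {S : Set ℝ} {t : ℝ} (h : IsPeriodicOHSolution γ S u) (ht : t ∈ S) :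
    Continuous (deriv (u t)) :=
  continuousOn_univ.1 (h.cont_ux.uncurry_left (f := fun t ↦ deriv (u t)) t ht)

lemma continuous_deriv_t {S : Set ℝ} {t : ℝ} (h : IsPeriodicOHSolution γ S u) (ht : t ∈ S) :
    Continuous fun x ↦ deriv (fun s ↦ u s x) t :=
  continuousOn_univ.1 (h.cont_ut.uncurry_left (f := fun t x ↦ deriv (fun s ↦ u s x) t) t ht)

lemma deriv_deriv_t_add_eq (h : IsPeriodicOHSolution γ (Ico 0 T) u) {t : ℝ} (ht : t ∈ Ico 0 T)
    (x : ℝ) : deriv (fun y ↦ deriv (fun s ↦ u s y) t) x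
      + deriv (u t) x ^ 2 + u t x * deriv (deriv (u t)) x = γ * u t x := by
  have hu : ContinuousOn (fun t ↦ u t x) (Ico 0 T) := h.cont_u.uncurry_right x (mem_univ x)
  have hux : ContinuousOn (fun t ↦ deriv (u t) x) (Ico 0 T) :=
    h.cont_ux.uncurry_right (f := fun t ↦ deriv (u t)) x (mem_univ x)
  have huxx : ContinuousOn (fun t ↦ deriv (deriv (u t)) x) (Ico 0 T) :=
    h.cont_uxx.uncurry_right (f := fun t ↦ deriv (deriv (u t))) x (mem_univ x)
  have hutx : ContinuousOn (fun t ↦ deriv (fun y ↦ deriv (fun s ↦ u s y) t) x) (Ico 0 T) :=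
    h.cont_utx.uncurry_right (f := fun t ↦ deriv fun y ↦ deriv (fun s ↦ u s y) t) x (mem_univ x)
  refine EqOn.of_subset_closure (s := Ioo 0 T) (fun s hs ↦ h.eqn s (Ioo_subset_Ico_self hs) hs.1 x)
    ((hutx.add (hux.pow 2)).add (hu.mul huxx)) (continuousOn_const.mul hu)
    Ioo_subset_Ico_self ?_ ht
  rw [closure_Ioo (ht.1.trans_lt ht.2).ne]
  exact Ico_subset_Icc_self

lemma hasDerivAt_materialDeriv (h : IsPeriodicOHSolution γ (Ico 0 T) u) {t : ℝ}
    (ht : t ∈ Ico 0 T) (x : ℝ) : HasDerivAt (materialDeriv u t) (γ * u t x) x := by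
  refine ((h.diff_tx t ht x).hasDerivAt.add
    ((h.diff_x t ht x).hasDerivAt.mul (h.diff_xx t ht x).hasDerivAt)).congr_deriv ?_
  rw [← h.deriv_deriv_t_add_eq ht x]
  ring

lemma hasDerivWithinAt_deriv_x (h : IsPeriodicOHSolution γ (Ico 0 T) u) {t : ℝ}
    (ht : t ∈ Ico 0 T) (x : ℝ) :
    HasDerivWithinAt (fun s ↦ deriv (u s) x) (deriv (fun y ↦ deriv (fun s ↦ u s y) t) x)
      (Ici t) t := by
  obtain ⟨b, htb, hbT⟩ := exists_between ht.2
  have hsub : Icc t b ⊆ Ico 0 T := Icc_subset_Ico ht.1 hbT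
  exact hasDerivWithinAt_Ici_of_continuousOn_mixed_deriv (f := u)
    (f₁ := fun s y ↦ deriv (fun r ↦ u r y) s)
    (f₁₂ := fun s ↦ deriv fun y ↦ deriv (fun r ↦ u r y) s) htb univ_mem
    (fun s hs y _ ↦ (h.diff_t s (hsub hs) y).hasDerivAt)
    (fun s hs ↦ (h.diff_x s (hsub hs) x).hasDerivAt)
    (fun s hs y _ ↦ (h.diff_tx s (hsub hs) y).hasDerivAt)
    (fun y _ ↦ (h.cont_ut.uncurry_right (f := fun s y ↦ deriv (fun r ↦ u r y) s) y
      (mem_univ y)).mono hsub)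
    (h.cont_utx.mono (prod_mono_left hsub))

lemma periodic_deriv_t (h : IsPeriodicOHSolution γ (Ico 0 T) u) {t : ℝ} (ht : t ∈ Ioo 0 T) :
    Function.Periodic (fun x ↦ deriv (fun s ↦ u s x) t) 1 := by
  refine fun x ↦ EventuallyEq.deriv_eq ?_
  filter_upwards [Ico_mem_nhds ht.1 ht.2] with s hs using h.periodic s hs x

lemma periodic_materialDeriv (h : IsPeriodicOHSolution γ (Ico 0 T) u) {t : ℝ}
    (ht : t ∈ Ioo 0 T) : Function.Periodic (materialDeriv u t) 1 := by
  have hu : Function.Periodic (u t) 1 := h.periodic t (Ioo_subset_Ico_self ht)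
  exact (h.periodic_deriv_t ht).add (hu.mul (deriv_periodic hu))

lemma integral_eq_zero (h : IsPeriodicOHSolution γ (Ico 0 T) u) (hγ : γ ≠ 0) {t : ℝ}
    (ht : t ∈ Ioo 0 T) : ∫ x in (0 : ℝ)..1, u t x = 0 := by
  have ht' : t ∈ Ico 0 T := Ioo_subset_Ico_self ht
  have hint : ∫ x in (0 : ℝ)..1, γ * u t x = materialDeriv u t 1 - materialDeriv u t 0 :=
    integral_eq_sub_of_hasDerivAt (fun x _ ↦ h.hasDerivAt_materialDeriv ht' x)
      ((h.continuous_u ht').const_mul γ |>.intervalIntegrable 0 1)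
  rw [(h.periodic_materialDeriv ht).eq, sub_self, intervalIntegral.integral_const_mul] at hint
  exact (mul_eq_zero.1 hint).resolve_left hγ

lemma integral_deriv_t_eq_zero (h : IsPeriodicOHSolution γ (Ico 0 T) u) (hγ : γ ≠ 0) {t : ℝ}
    (ht : t ∈ Ioo 0 T) : ∫ x in (0 : ℝ)..1, deriv (fun s ↦ u s x) t = 0 := by
  have hderiv : HasDerivAt (fun s ↦ ∫ x in (0 : ℝ)..1, u s x)
      (∫ x in (0 : ℝ)..1, deriv (fun s ↦ u s x) t) t :=
    hasDerivAt_integral_of_continuousOn_deriv (F' := fun s x ↦ deriv (fun r ↦ u r x) s)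
      (Ico_mem_nhds ht.1 ht.2) (fun s hs ↦ (h.continuous_u hs).continuousOn)
      (h.cont_ut.mono (prod_mono_right (subset_univ _)))
      (fun s hs x _ ↦ (h.diff_t s hs x).hasDerivAt)
  have hconst : (fun _ ↦ 0) =ᶠ[𝓝 t] fun s ↦ ∫ x in (0 : ℝ)..1, u s x := by
    filter_upwards [Ioo_mem_nhds ht.1 ht.2] with s hs using (h.integral_eq_zero hγ hs).symm
  exact (hderiv.congr_of_eventuallyEq hconst).unique (hasDerivAt_const t 0)

lemma integral_materialDeriv_eq_zero (h : IsPeriodicOHSolution γ (Ico 0 T) u) (hγ : γ ≠ 0)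
    {t : ℝ} (ht : t ∈ Ioo 0 T) : ∫ x in (0 : ℝ)..1, materialDeriv u t x = 0 := by
  have ht' : t ∈ Ico 0 T := Ioo_subset_Ico_self ht
  have hcont : Continuous fun x ↦ u t x * deriv (u t) x :=
    (h.continuous_u ht').mul (h.continuous_deriv_x ht')
  have hadv : ∫ x in (0 : ℝ)..1, u t x * deriv (u t) x = u t 1 ^ 2 / 2 - u t 0 ^ 2 / 2 := by
    refine integral_eq_sub_of_hasDerivAt (f := fun x ↦ u t x ^ 2 / 2) (fun x _ ↦ ?_)
      (hcont.intervalIntegrable 0 1)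
    refine (((h.diff_x t ht' x).hasDerivAt.pow 2).div_const 2).congr_deriv ?_
    push_cast
    ring
  have hper : u t 1 = u t 0 := Function.Periodic.eq (h.periodic t ht')
  unfold materialDeriv
  rw [intervalIntegral.integral_add ((h.continuous_deriv_t ht').intervalIntegrable 0 1)
    (hcont.intervalIntegrable 0 1), h.integral_deriv_t_eq_zero hγ ht, hadv, hper, sub_self,
    add_zero]

lemma exists_materialDeriv_eq_zero (h : IsPeriodicOHSolution γ (Ico 0 T) u) (hγ : γ ≠ 0) {t : ℝ}
    (ht : t ∈ Ioo 0 T) : ∃ z ∈ Ioo (0 : ℝ) 1, materialDeriv u t z = 0 := by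
  have hcont : Continuous (materialDeriv u t) := continuous_iff_continuousAt.2 fun x ↦
    (h.hasDerivAt_materialDeriv (Ioo_subset_Ico_self ht) x).continuousAt
  obtain ⟨z, hz, hzavg⟩ :=
    exists_eq_interval_average (zero_ne_one' ℝ) hcont.continuousOn
  rw [uIoo_of_le zero_le_one] at hz
  rw [interval_average_eq, h.integral_materialDeriv_eq_zero hγ ht, smul_zero] at hzavg
  exact ⟨z, hz, hzavg⟩

lemma abs_materialDeriv_le (h : IsPeriodicOHSolution γ (Ico 0 T) u) (hγ : γ ≠ 0) {t M x : ℝ}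
    (ht : t ∈ Ioo 0 T) (hM : ∀ y, |u t y| ≤ M) (hx : x ∈ Icc (0 : ℝ) 1) :
    |materialDeriv u t x| ≤ |γ| * M := by
  obtain ⟨z, hz, hz0⟩ := h.exists_materialDeriv_eq_zero hγ ht
  have hM₀ : 0 ≤ M := (abs_nonneg _).trans (hM 0)
  have hlip : ‖materialDeriv u t x - materialDeriv u t z‖ ≤ |γ| * M * ‖x - z‖ := by
    refine Convex.norm_image_sub_le_of_norm_hasDerivWithin_le (fun y _ ↦
      (h.hasDerivAt_materialDeriv (Ioo_subset_Ico_self ht) y).hasDerivWithinAt) (fun y _ ↦ ?_)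
      convex_univ (mem_univ z) (mem_univ x)
    rw [norm_mul, Real.norm_eq_abs, Real.norm_eq_abs]
    exact mul_le_mul_of_nonneg_left (hM y) (abs_nonneg γ)
  have hxz : |x - z| ≤ 1 := by
    rw [abs_le]
    constructor <;> linarith [hx.1, hx.2, hz.1, hz.2]
  calc |materialDeriv u t x| = ‖materialDeriv u t x - materialDeriv u t z‖ := by
        rw [hz0, sub_zero, Real.norm_eq_abs]
    _ ≤ |γ| * M * |x - z| := hlip
    _ ≤ |γ| * M := mul_le_of_le_one_right (by positivity) hxz

lemma mul_deriv_t_le_of_isMaxOn (h : IsPeriodicOHSolution γ (Ico 0 T) u) (hγ : γ ≠ 0)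
    {t x : ℝ} (ht : t ∈ Ioo 0 T) (hx : x ∈ Icc (0 : ℝ) 1)
    (hmax : IsMaxOn (fun y ↦ u t y ^ 2) univ x) :
    u t x * deriv (fun s ↦ u s x) t ≤ |γ| * u t x ^ 2 := by
  have hcrit : u t x * deriv (u t) x = 0 := by
    have hder := (h.diff_x t (Ioo_subset_Ico_self ht) x).hasDerivAt.pow 2
    have := (hmax.isLocalMax univ_mem).hasDerivAt_eq_zero hder
    push_cast at this
    linarith
  have hbound : |materialDeriv u t x| ≤ |γ| * |u t x| :=
    h.abs_materialDeriv_le hγ ht (fun y ↦ sq_le_sq.1 (hmax (mem_univ y))) hx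
  calc u t x * deriv (fun s ↦ u s x) t = u t x * materialDeriv u t x := by
        rw [materialDeriv, hcrit, add_zero]
    _ ≤ |u t x| * |materialDeriv u t x| := (le_abs_self _).trans_eq (abs_mul _ _)
    _ ≤ |u t x| * (|γ| * |u t x|) := by gcongr
    _ = |γ| * u t x ^ 2 := by rw [← sq_abs (u t x)]; ring

/- A maximizer at time `t` bounds the maximum from below at nearby times, which controls its growth
only backwards in time; hence the minimum principle is applied to `-u²` with time reversed. The
rate `4 |γ|` rather than the optimal `2 |γ|` makes the differential inequality strict. -/
lemma exists_sq_mul_exp_le (h : IsPeriodicOHSolution γ (Ico 0 T) u) (hγ : γ ≠ 0) {t : ℝ}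
    (ht : t ∈ Ico 0 T) (x : ℝ) : ∃ y, u t x ^ 2 * Real.exp (-4 * |γ| * t) ≤ u 0 y ^ 2 := by
  rcases eq_or_ne (u t x) 0 with hu | hu
  · exact ⟨0, by simpa [hu] using sq_nonneg (u 0 0)⟩
  have hsub : ∀ s ∈ Icc 0 t, t - s ∈ Ico 0 T := fun s hs ↦
    ⟨by linarith [hs.2], by linarith [hs.1, ht.2]⟩
  suffices ∃ y ∈ Icc (0 : ℝ) 1, -u (t - t) y ^ 2 ≤ -u t x ^ 2 * Real.exp (-4 * |γ| * t) by
    obtain ⟨y, -, hy⟩ := this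
    rw [sub_self] at hy
    exact ⟨y, by linarith⟩
  refine exists_le_of_isMinOn_deriv_lt (F := fun s y ↦ -u (t - s) y ^ 2)
    (B := fun s ↦ -u t x ^ 2 * Real.exp (-4 * |γ| * s))
    (B' := fun s ↦ 4 * |γ| * (u t x ^ 2 * Real.exp (-4 * |γ| * s)))
    isCompact_Icc ?_ (fun s ↦ ?_) ?_ (fun s hs y hy hmin ↦ ?_) (right_mem_Icc.2 ht.1)
  · exact ((h.cont_u.comp (f := fun p : ℝ × ℝ ↦ (t - p.1, p.2)) (by fun_prop)
      fun p hp ↦ ⟨hsub p.1 hp.1, mem_univ _⟩).pow 2).neg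
  · refine (((hasDerivAt_id s).const_mul (-4 * |γ|)).exp.const_mul (-u t x ^ 2)).congr_deriv ?_
    simp only [id]
    ring
  · obtain ⟨y, hy, hxy⟩ := Function.Periodic.exists_mem_Ico₀ (h.periodic t ht) one_pos x
    exact ⟨y, Ico_subset_Icc_self hy, by simp [hxy]⟩
  · have hts : t - s ∈ Ioo 0 T := ⟨sub_pos.2 hs.2, (hsub s (Ico_subset_Icc_self hs)).2⟩
    have hts' : t - s ∈ Ico 0 T := Ioo_subset_Ico_self hts
    have hper : Function.Periodic (fun y ↦ -u (t - s) y ^ 2) 1 :=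
      fun y ↦ congrArg (-· ^ 2) (h.periodic (t - s) hts' y)
    have hmax : IsMaxOn (fun y ↦ u (t - s) y ^ 2) univ y := by
      simpa using (isMinOn_univ_of_periodic hper one_pos hmin).neg
    have hdt := (h.diff_t (t - s) hts' y).hasDerivAt.comp_const_sub t s
    have hsqdt : HasDerivAt (fun s ↦ -u (t - s) y ^ 2)
        (2 * (u (t - s) y * deriv (fun r ↦ u r y) (t - s))) s := by
      refine (hdt.pow 2).neg.congr_deriv ?_
      push_cast
      ring
    refine ⟨_, hsqdt.hasDerivWithinAt, fun htouch ↦ ?_⟩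
    have hle := h.mul_deriv_t_le_of_isMaxOn hγ hts hy hmax
    have hpos : 0 < |γ| * (u t x ^ 2 * Real.exp (-4 * |γ| * s)) := by positivity
    have hsq : u (t - s) y ^ 2 = u t x ^ 2 * Real.exp (-4 * |γ| * s) := by linarith
    rw [hsq] at hle
    linarith

lemma abs_le_mul_exp (h : IsPeriodicOHSolution γ (Ico 0 T) u) (hγ : γ ≠ 0) {A t : ℝ}
    (hA : ∀ y, |u 0 y| ≤ A) (ht : t ∈ Ico 0 T) (x : ℝ) :
    |u t x| ≤ A * Real.exp (2 * |γ| * t) := by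
  have hA₀ : 0 ≤ A := (abs_nonneg _).trans (hA 0)
  obtain ⟨y, hy⟩ := h.exists_sq_mul_exp_le hγ ht x
  have hexp : Real.exp (2 * |γ| * t) ^ 2 = (Real.exp (-4 * |γ| * t))⁻¹ := by
    rw [← Real.exp_nat_mul, ← Real.exp_neg]
    push_cast
    ring_nf
  refine abs_le_of_sq_le_sq ?_ (by positivity)
  rw [mul_pow, hexp, ← div_eq_mul_inv, le_div_iff₀ (Real.exp_pos _)]
  exact hy.trans (sq_le_sq' (abs_le.1 (hA y)).1 (abs_le.1 (hA y)).2)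

/- For `γ = 0` the mean of `u` need not vanish, so `u` itself is not controlled by its initial
data; the source term `γ u` is. -/
lemma abs_mul_le_mul_exp (h : IsPeriodicOHSolution γ (Ico 0 T) u) {A t : ℝ}
    (hA : ∀ y, |u 0 y| ≤ A) (ht : t ∈ Ico 0 T) (x : ℝ) :
    |γ * u t x| ≤ |γ| * (A * Real.exp (2 * |γ| * t)) := by
  rcases eq_or_ne γ 0 with rfl | hγ
  · simp
  · rw [abs_mul]
    exact mul_le_mul_of_nonneg_left (h.abs_le_mul_exp hγ hA ht x) (abs_nonneg γ)

lemma deriv_deriv_t_eq_of_isMinOn (h : IsPeriodicOHSolution γ (Ico 0 T) u) {t x : ℝ}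
    (ht : t ∈ Ico 0 T) (hmin : IsMinOn (deriv (u t)) (Icc 0 1) x) :
    deriv (fun y ↦ deriv (fun s ↦ u s y) t) x = γ * u t x - deriv (u t) x ^ 2 := by
  have hmin' : IsMinOn (deriv (u t)) univ x :=
    isMinOn_univ_of_periodic (deriv_periodic (h.periodic t ht)) one_pos hmin
  have heqn := h.deriv_deriv_t_add_eq ht x
  rw [(hmin'.isLocalMin univ_mem).deriv_eq_zero] at heqn
  linarith

/- The barrier `-2 / (τ - t)` for `u_x` solves the Riccati equation with half the quadratic term of
`(u_x)_t = γ u - u_x²`. It is propagated in the form `(τ - t) u_x ≤ -2`, which is nonsingular and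
fails at `t = τ`. -/
theorem lifespan_le (h : IsPeriodicOHSolution γ (Ico 0 T) u) {A τ x : ℝ}
    (hA : ∀ y, |u 0 y| ≤ A) (hτ : 0 < τ)
    (hsource : τ ^ 2 * (|γ| * (A * Real.exp (2 * |γ| * τ))) < 2)
    (hx : τ * deriv (u 0) x ≤ -2) : T ≤ τ := by
  by_contra! hτT
  have hA₀ : 0 ≤ A := (abs_nonneg _).trans (hA 0)
  have hsub : Icc 0 τ ⊆ Ico 0 T := Icc_subset_Ico_right hτT
  suffices ∃ y ∈ Icc (0 : ℝ) 1, (τ - τ) * deriv (u τ) y ≤ -2 by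
    obtain ⟨y, -, hy⟩ := this
    rw [sub_self, zero_mul] at hy
    norm_num at hy
  refine exists_le_of_isMinOn_deriv_lt (F := fun t y ↦ (τ - t) * deriv (u t) y)
    (B := fun _ ↦ -2) (B' := fun _ ↦ 0) isCompact_Icc ?_ (fun t ↦ hasDerivAt_const t (-2)) ?_
    (fun t ht y _ hmin ↦ ?_) (right_mem_Icc.2 hτ.le)
  · exact (by fun_prop : Continuous fun p : ℝ × ℝ ↦ τ - p.1).continuousOn.mul
      (h.cont_ux.mono (prod_mono hsub (subset_univ _)))
  · have hper : Function.Periodic (u 0) 1 := h.periodic 0 (hsub (left_mem_Icc.2 hτ.le))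
    obtain ⟨y, hy, hxy⟩ := (deriv_periodic hper).exists_mem_Ico₀ one_pos x
    exact ⟨y, Ico_subset_Icc_self hy, by simpa [← hxy] using hx⟩
  · have ht' : t ∈ Ico 0 T := hsub (Ico_subset_Icc_self ht)
    have hq : 0 < τ - t := sub_pos.2 ht.2
    have hmin' : IsMinOn (deriv (u t)) (Icc 0 1) y :=
      fun z hz ↦ le_of_mul_le_mul_left (hmin hz) hq
    have hdt := h.hasDerivWithinAt_deriv_x ht' y
    rw [h.deriv_deriv_t_eq_of_isMinOn ht' hmin'] at hdt
    refine ⟨_, ((hasDerivWithinAt_id t (Ici t)).const_sub τ).mul hdt, fun htouch ↦ ?_⟩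
    have hγu : |γ * u t y| ≤ |γ| * (A * Real.exp (2 * |γ| * τ)) :=
      (h.abs_mul_le_mul_exp hA ht' y).trans (by gcongr; exact ht.2.le)
    have hlt : (τ - t) ^ 2 * (γ * u t y) < 2 := by
      calc (τ - t) ^ 2 * (γ * u t y) ≤ (τ - t) ^ 2 * |γ * u t y| := by gcongr; exact le_abs_self _
        _ ≤ τ ^ 2 * (|γ| * (A * Real.exp (2 * |γ| * τ))) := by gcongr; linarith [ht.1]
        _ < 2 := hsource
    refine neg_of_mul_neg_right ?_ hq.le
    calc (τ - t) * (-1 * deriv (u t) y + (τ - t) * (γ * u t y - deriv (u t) y ^ 2))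
        = (τ - t) ^ 2 * (γ * u t y) - (τ - t) * deriv (u t) y
          - ((τ - t) * deriv (u t) y) ^ 2 := by ring
      _ = (τ - t) ^ 2 * (γ * u t y) - 2 := by rw [htouch]; ring
      _ < 0 := by linarith

end IsPeriodicOHSolution

lemma exists_pos_le_sq_mul_exp_lt (M k : ℝ) {τ : ℝ} (hτ : 0 < τ) :
    ∃ σ, 0 < σ ∧ σ ≤ τ ∧ σ ^ 2 * (M * Real.exp (k * σ)) < 2 := by
  have hlim : Tendsto (fun σ : ℝ ↦ σ ^ 2 * (M * Real.exp (k * σ))) (𝓝[>] 0) (𝓝 0) :=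
    ((by fun_prop : Continuous fun σ : ℝ ↦ σ ^ 2 * (M * Real.exp (k * σ))).tendsto' 0 0
      (by simp)).mono_left nhdsWithin_le_nhds
  obtain ⟨σ, hσ, hσ₀, hστ⟩ :=
    ((hlim.eventually_lt_const two_pos).and (Ioc_mem_nhdsGT hτ)).exists
  exact ⟨σ, hσ₀, hστ, hσ⟩

theorem wave_breaking_scaled_even_general (γ : ℝ) {u₀ : ℝ → ℝ} (hdiff : Differentiable ℝ u₀)
    (hper : Function.Periodic u₀ 1) (hnonconst : ∃ x y, u₀ x ≠ u₀ y) {τ : ℝ} (hτ : 0 < τ) :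
    ∀ᶠ n : ℕ in atTop, ∀ (T : ℝ) (u : ℝ → ℝ → ℝ), IsPeriodicOHSolution γ (Ico 0 T) u →
      (∀ x, u 0 x = u₀ (n * x)) → T ≤ τ := by
  obtain ⟨y, hy⟩ := exists_deriv_neg_of_periodic hper one_pos hdiff hnonconst
  obtain ⟨A, hA⟩ :=
    (hper.isBounded_of_continuous one_ne_zero hdiff.continuous).exists_norm_le
  obtain ⟨σ, hσ, hστ, hsource⟩ := exists_pos_le_sq_mul_exp_lt (|γ| * A) (2 * |γ|) hτ
  have hsteep : Tendsto (fun n : ℕ ↦ (n : ℝ) * (σ * deriv u₀ y)) atTop atBot :=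
    tendsto_natCast_atTop_atTop.atTop_mul_const_of_neg (mul_neg_of_pos_of_neg hσ hy)
  filter_upwards [hsteep.eventually_le_atBot (-2), eventually_ne_atTop 0] with n hn hn₀ T u hu hu₀
  refine (hu.lifespan_le (A := A) (x := y / n) (fun x ↦ ?_) hσ ?_ ?_).trans hστ
  · exact hu₀ x ▸ hA _ (mem_range_self _)
  · rwa [← mul_assoc |γ|]
  · rw [funext hu₀, deriv_comp_mul_left, mul_div_cancel₀ _ (Nat.cast_ne_zero.2 hn₀), smul_eq_mul]
    linarith

/-- for a nonconstant even mean-zero `u₀` and all large `n`, the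
initial data `x ↦ u₀(nx)` leads to finite-time wave breaking: no periodic
classical solution with this data and `u_x` bounded from below is global. -/
theorem wave_breaking_scaled_even
    (γ : ℝ) (hγ : 0 < γ) (u₀ : ℝ → ℝ) (hreg : ContDiff ℝ 2 u₀)
    (hper : ∀ x : ℝ, u₀ (x + 1) = u₀ x)
    (heven : ∀ x : ℝ, u₀ (-x) = u₀ x)
    (hnonconst : ∃ x y : ℝ, u₀ x ≠ u₀ y)
    (hmean : (∫ x in (0:ℝ)..1, u₀ x) = 0) :
    ∃ N : ℕ, ∀ n : ℕ, N ≤ n →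
      ∀ u : ℝ → ℝ → ℝ,
        IsPeriodicOHSolution γ (Set.Ici 0) u →
        (∀ x : ℝ, u 0 x = u₀ ((n : ℝ) * x)) →
        ¬ ∃ c : ℝ, ∀ t ∈ Set.Ici (0 : ℝ), ∀ x : ℝ, c ≤ deriv (u t) x := by
  obtain ⟨N, hN⟩ := eventually_atTop.1 (wave_breaking_scaled_even_general γ
    (hreg.differentiable two_ne_zero) hper hnonconst one_pos)
  refine ⟨N, fun n hn u hu hu₀ _ ↦ ?_⟩
  exact absurd (hN n hn 2 u (hu.mono Ico_subset_Ici_self) hu₀) (by norm_num)
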